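/- arXiv:1703.05214 — 2 statements merged into one kernel-verified Lean document; each statement's English description precedes it below -/
import Mathlib

section
/- Let I ⊆ ℝ be an open interval, γ : I → ℝ² a continuously differentiable unit-speed curve (‖γ'(t)‖ = 1 for all t ∈ I), and ν : I → ℝ² a continuously differentiable unit normal field along γ (‖ν(t)‖ = 1 and ⟨ν(t), γ'(t)⟩ = 0 for all t ∈ I). Let v : ℝ² → ℝ² be continuously differentiable and h : ℝ² → ℝ be twice continuously differentiable. Assume that for every t ∈ I: ⟨v(γ(t)), ν(t)⟩ = 0, ⟨∇h(γ(t)), ν(t)⟩ = 0, and ⟨(∇v(γ(t)) + ∇v(γ(t))ᵀ) ν(t), γ'(t)⟩ = 0. Then the normal derivative of the scalar function x ↦ ⟨v(x), ∇h(x)⟩ vanishes along γ, i.e. ⟨∇(⟨v, ∇h⟩)(γ(t)), ν(t)⟩ = 0 for all t ∈ I. -/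
/-!
Write `T = γ' t`. In the plane `(T, ν)` is an orthonormal frame, so the tangential vectors `v` and
`∇h` equal `α T` and `β T`. Differentiating `⟨v, ν⟩ = 0` and `⟨∇h, ν⟩ = 0` along the curve gives
`⟨(Dv) T, ν⟩ = -α ⟨T, ν'⟩` and `D²h(T, ν) = -β ⟨T, ν'⟩`. The normal derivative of `⟨v, ∇h⟩` is
`β ⟨(Dv) ν, T⟩ + α D²h(ν, T)`; by the condition on the symmetric gradient and the symmetry of `D²h`
this is `-β ⟨(Dv) T, ν⟩ + α D²h(T, ν) = αβ ⟨T, ν'⟩ - αβ ⟨T, ν'⟩ = 0`.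
-/

open scoped RealInnerProductSpace

theorem eq_inner_smul_of_inner_normal_eq_zero {T n w : EuclideanSpace ℝ (Fin 2)}
    (hT : ‖T‖ = 1) (hn : ‖n‖ = 1) (hnT : ⟪n, T⟫ = 0) (hw : ⟪w, n⟫ = 0) :
    w = ⟪w, T⟫ • T := by
  have hT2 : ⟪T, T⟫ = 1 := by rw [real_inner_self_eq_norm_sq, hT]; norm_num
  have hn2 : ⟪n, n⟫ = 1 := by rw [real_inner_self_eq_norm_sq, hn]; norm_num
  have hu : ⟪w - ⟪w, T⟫ • T, n⟫ = 0 := by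
    rw [inner_sub_left, real_inner_smul_left, hw, real_inner_comm n T, hnT]; simp
  have huT : ⟪w - ⟪w, T⟫ • T, T⟫ = 0 := by
    rw [inner_sub_left, real_inner_smul_left, hT2]; simp
  rw [← sub_eq_zero]
  generalize w - ⟪w, T⟫ • T = u at hu huT ⊢
  simp only [PiLp.inner_apply, Fin.sum_univ_two, RCLike.inner_apply, conj_trivial] at *
  -- Lagrange's identity: the determinant of the frame `(n, T)` squares to one.
  have hd : (n 0 * T 1 - n 1 * T 0) ^ 2 = 1 := by
    linear_combination (T 0 * T 0 + T 1 * T 1) * hn2 + hT2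
      - (T 0 * n 0 + T 1 * n 1) * hnT
  have hd0 : n 0 * T 1 - n 1 * T 0 ≠ 0 := by
    intro h0; rw [h0] at hd; norm_num at hd
  ext i
  fin_cases i
  · refine (mul_eq_zero.1 (?_ : (n 0 * T 1 - n 1 * T 0) * u 0 = 0)).resolve_left hd0
    linear_combination T 1 * hu - n 1 * huT
  · refine (mul_eq_zero.1 (?_ : (n 0 * T 1 - n 1 * T 0) * u 1 = 0)).resolve_left hd0
    linear_combination n 0 * huT - T 0 * hu

theorem inner_gradient_eq_fderiv (f : EuclideanSpace ℝ (Fin 2) → ℝ)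
    (x w : EuclideanSpace ℝ (Fin 2)) : ⟪gradient f x, w⟫ = fderiv ℝ f x w := by
  simp [gradient]

/-- Curve formulation of the boundary lemma: if along a unit-speed `C¹` curve `γ` with
`C¹` unit normal field `ν` a `C¹` vector field `v` is tangential (`⟨v, ν⟩ = 0`), a `C²`
function `h` has vanishing normal derivative (`⟨∇h, ν⟩ = 0`), and the tangential part of
`(∇v + ∇vᵀ)ν` vanishes, then the normal derivative of `x ↦ ⟨v(x), ∇h(x)⟩` vanishes
along the curve. -/
theorem normal_deriv_inner_grad_eq_zero
    (I : Set ℝ) (hI : ∃ a b : ℝ, I = Set.Ioo a b)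
    (γ γ' ν ν' : ℝ → EuclideanSpace ℝ (Fin 2))
    (hγ : ∀ t ∈ I, HasDerivAt γ (γ' t) t) (hγ'cont : ContinuousOn γ' I)
    (hγunit : ∀ t ∈ I, ‖γ' t‖ = 1)
    (hν : ∀ t ∈ I, HasDerivAt ν (ν' t) t) (hν'cont : ContinuousOn ν' I)
    (hνunit : ∀ t ∈ I, ‖ν t‖ = 1)
    (hνperp : ∀ t ∈ I, ⟪ν t, γ' t⟫ = 0)
    (v : EuclideanSpace ℝ (Fin 2) → EuclideanSpace ℝ (Fin 2)) (hv : ContDiff ℝ 1 v)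
    (h : EuclideanSpace ℝ (Fin 2) → ℝ) (hh : ContDiff ℝ 2 h)
    (htang : ∀ t ∈ I, ⟪v (γ t), ν t⟫ = 0)
    (hneumann : ∀ t ∈ I, ⟪gradient h (γ t), ν t⟫ = 0)
    (hsymgrad : ∀ t ∈ I,
      ⟪fderiv ℝ v (γ t) (ν t), γ' t⟫ + ⟪fderiv ℝ v (γ t) (γ' t), ν t⟫ = 0) :
    ∀ t ∈ I, ⟪gradient (fun x => ⟪v x, gradient h x⟫) (γ t), ν t⟫ = 0 := by
  intro t ht
  have hIo : I ∈ nhds t := by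
    obtain ⟨a, b, rfl⟩ := hI
    exact isOpen_Ioo.mem_nhds ht
  have hvd : HasFDerivAt v (fderiv ℝ v (γ t)) (γ t) :=
    (hv.differentiable one_ne_zero _).hasFDerivAt
  have hhd : HasFDerivAt (fderiv ℝ h) (fderiv ℝ (fderiv ℝ h) (γ t)) (γ t) :=
    ((hh.fderiv_right (m := 1) (by norm_num)).differentiable one_ne_zero _).hasFDerivAt
  have hsymm : IsSymmSndFDerivAt ℝ h (γ t) :=
    hh.contDiffAt.isSymmSndFDerivAt (by simp)
  -- `⟨v, ν⟩ = 0` differentiated along the curve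
  have h1 : ⟪v (γ t), ν' t⟫ + ⟪fderiv ℝ v (γ t) (γ' t), ν t⟫ = 0 := by
    have e := (hvd.comp_hasDerivAt t (hγ t ht)).inner ℝ (hν t ht)
    refine e.unique ((hasDerivAt_const t (0 : ℝ)).congr_of_eventuallyEq ?_)
    filter_upwards [hIo] with s hs using htang s hs
  -- `⟨∇h, ν⟩ = 0` differentiated along the curve
  have h2 : fderiv ℝ (fderiv ℝ h) (γ t) (γ' t) (ν t) + fderiv ℝ h (γ t) (ν' t) = 0 := by
    have e := (hhd.comp_hasDerivAt t (hγ t ht)).clm_apply (hν t ht)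
    refine e.unique ((hasDerivAt_const t (0 : ℝ)).congr_of_eventuallyEq ?_)
    filter_upwards [hIo] with s hs
    rw [← hneumann s hs, inner_gradient_eq_fderiv]
    rfl
  have hfun : (fun x => ⟪v x, gradient h x⟫) = fun x => fderiv ℝ h x (v x) := by
    funext x
    rw [real_inner_comm, inner_gradient_eq_fderiv]
  rw [hfun, inner_gradient_eq_fderiv, (hhd.clm_apply hvd).fderiv]
  have hvT := eq_inner_smul_of_inner_normal_eq_zero (hγunit t ht) (hνunit t ht) (hνperp t ht)
    (htang t ht)
  have hgT := eq_inner_smul_of_inner_normal_eq_zero (hγunit t ht) (hνunit t ht) (hνperp t ht)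
    (hneumann t ht)
  have h3 := hsymgrad t ht
  rw [← inner_gradient_eq_fderiv] at h2
  simp only [add_apply, ContinuousLinearMap.comp_apply, ContinuousLinearMap.flip_apply]
  rw [← inner_gradient_eq_fderiv]
  generalize ⟪v (γ t), γ' t⟫ = α at hvT
  generalize ⟪gradient h (γ t), γ' t⟫ = β at hgT
  rw [hvT, real_inner_smul_left] at h1
  rw [hgT, real_inner_smul_left] at h2
  rw [hvT, hgT, real_inner_smul_left, map_smul, smul_eq_mul, hsymm.eq (ν t) (γ' t),
    real_inner_comm]
  linear_combination β * h3 - β * h1 + α * h2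
end

section
/- Let U ⊆ ℝ² be open, let h, ĥ : ℝ² → ℝ be twice continuously differentiable on U, let α ∈ ℝ and x ∈ U. Then the map s ↦ K(h + s ĥ)(x) + α (h + s ĥ)(x) is differentiable at s = 0 with derivative div(∇ĥ/√(1+‖∇h‖²))(x) − div(∇h · ⟨∇ĥ, ∇h⟩/(1+‖∇h‖²)^{3/2})(x) + α ĥ(x). In particular, at h = 0 this derivative equals Δĥ(x) + α ĥ(x). -/
/-!
Put `W v = v / √(1 + ‖v‖²)`, a smooth map of `ℝ²`, so that `K(h) = div (W ∘ ∇h)`. Near `x` the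
gradient is additive, `∇(h + s h') = g + s g'`, so by the chain rule `K(h + s h')(x)` is the trace of
`DW(g + s g') ∘ (Dg + s Dg')` at `x`. Its derivative in `s` at `0` is the trace of
`u ↦ D²W(g)(g')(Dg u) + DW(g)(Dg' u)`. By symmetry of `D²W` this operator is the Jacobian of
`y ↦ DW(g y)(g' y)`, and `DW(v) w = w / √(1 + ‖v‖²) - v ⟪w, v⟫ / √(1 + ‖v‖²)³` identifies that field
with the difference of the two fields in the theorem.
-/

open scoped RealInnerProductSpace

/-- The divergence of a vector field on `ℝ²`: the trace of its Jacobian. -/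
noncomputable def divg (F : EuclideanSpace ℝ (Fin 2) → EuclideanSpace ℝ (Fin 2))
    (x : EuclideanSpace ℝ (Fin 2)) : ℝ :=
  LinearMap.trace ℝ (EuclideanSpace ℝ (Fin 2)) (fderiv ℝ F x).toLinearMap

/-- The mean curvature operator `K(h) = div (∇h / √(1 + ‖∇h‖²))`. -/
noncomputable def meanCurv (h : EuclideanSpace ℝ (Fin 2) → ℝ)
    (x : EuclideanSpace ℝ (Fin 2)) : ℝ :=
  divg (fun y => (Real.sqrt (1 + ‖gradient h y‖ ^ 2))⁻¹ • gradient h y) x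

/-- The Laplacian of `h : ℝ² → ℝ`: the trace of the Hessian `D(∇h)`. -/
noncomputable def lap (h : EuclideanSpace ℝ (Fin 2) → ℝ)
    (x : EuclideanSpace ℝ (Fin 2)) : ℝ :=
  LinearMap.trace ℝ (EuclideanSpace ℝ (Fin 2)) (fderiv ℝ (gradient h) x).toLinearMap

/-- The capillary flux `W v = v / √(1 + ‖v‖²)`, so that `meanCurv h = div (W ∘ ∇h)`. -/
noncomputable def flux (v : EuclideanSpace ℝ (Fin 2)) : EuclideanSpace ℝ (Fin 2) :=
  (Real.sqrt (1 + ‖v‖ ^ 2))⁻¹ • v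

lemma one_add_normSq_ne (v : EuclideanSpace ℝ (Fin 2)) : 1 + ‖v‖ ^ 2 ≠ 0 := by positivity

lemma sqrt_one_add_normSq_ne (v : EuclideanSpace ℝ (Fin 2)) :
    Real.sqrt (1 + ‖v‖ ^ 2) ≠ 0 := by positivity

lemma contDiff_flux : ContDiff ℝ 2 flux := by
  unfold flux
  exact (((contDiff_const.add (contDiff_norm_sq ℝ)).sqrt one_add_normSq_ne).inv
    sqrt_one_add_normSq_ne).smul contDiff_id

lemma fderiv_flux_apply (v w : EuclideanSpace ℝ (Fin 2)) :
    fderiv ℝ flux v w = (Real.sqrt (1 + ‖v‖ ^ 2))⁻¹ • w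
      - (⟪w, v⟫ / (Real.sqrt (1 + ‖v‖ ^ 2)) ^ 3) • v := by
  have h0 : HasFDerivAt (fun v : EuclideanSpace ℝ (Fin 2) => 1 + ‖v‖ ^ 2)
      (2 • (innerSL ℝ v)) v :=
    (hasStrictFDerivAt_norm_sq v).hasFDerivAt.const_add 1
  have h1 := (hasDerivAt_inv (sqrt_one_add_normSq_ne v)).comp_hasFDerivAt v
    (h0.sqrt (one_add_normSq_ne v))
  have h2 : HasFDerivAt flux _ v := h1.smul (hasFDerivAt_id v)
  rw [h2.fderiv]
  have hs := sqrt_one_add_normSq_ne v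
  simp only [add_apply, smul_apply,
    ContinuousLinearMap.smulRight_apply, innerSL_apply_apply, ContinuousLinearMap.id_apply,
    Function.comp, sub_eq_add_neg, ← neg_smul, real_inner_comm v w, smul_eq_mul,
    nsmul_eq_mul]
  congr 2
  field_simp
  push_cast
  ring

/-- The trace as a continuous linear functional on the operators of the plane. -/
noncomputable def traceCLM :
    (EuclideanSpace ℝ (Fin 2) →L[ℝ] EuclideanSpace ℝ (Fin 2)) →L[ℝ] ℝ :=
  LinearMap.toContinuousLinearMap
    ((LinearMap.trace ℝ (EuclideanSpace ℝ (Fin 2))).comp (ContinuousLinearMap.coeLM ℝ))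

lemma divg_eq (F : EuclideanSpace ℝ (Fin 2) → EuclideanSpace ℝ (Fin 2))
    (x : EuclideanSpace ℝ (Fin 2)) : divg F x = traceCLM (fderiv ℝ F x) := rfl

lemma differentiableAt_gradient {h : EuclideanSpace ℝ (Fin 2) → ℝ}
    {x : EuclideanSpace ℝ (Fin 2)} (hh : ContDiffAt ℝ 2 h x) :
    DifferentiableAt ℝ (gradient h) x :=
  ((InnerProductSpace.toDual ℝ (EuclideanSpace ℝ (Fin 2))).symm.toContinuousLinearEquiv
    |>.differentiableAt).comp x
    ((hh.fderiv_right (m := 1) (by norm_num)).differentiableAt (by norm_num))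

lemma gradient_add_mul {h h' : EuclideanSpace ℝ (Fin 2) → ℝ} {y : EuclideanSpace ℝ (Fin 2)}
    (hh : DifferentiableAt ℝ h y) (hh' : DifferentiableAt ℝ h' y) (s : ℝ) :
    gradient (fun z => h z + s * h' z) y = gradient h y + s • gradient h' y := by
  unfold gradient
  rw [fderiv_fun_add hh (hh'.const_mul s), fderiv_const_mul hh']
  simp

/-- The derivative at `s = 0` of the divergence of `W ∘ (g + s g')` is the divergence of
`y ↦ DW(g y)(g' y)`; the two traces agree because `D²W` is symmetric. -/
lemma hasDerivAt_divg_flux {g g' : EuclideanSpace ℝ (Fin 2) → EuclideanSpace ℝ (Fin 2)}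
    {x : EuclideanSpace ℝ (Fin 2)} (hg : DifferentiableAt ℝ g x)
    (hg' : DifferentiableAt ℝ g' x) :
    HasDerivAt (fun s : ℝ => divg (fun y => flux (g y + s • g' y)) x)
      (divg (fun y => fderiv ℝ flux (g y) (g' y)) x) 0 := by
  have hW : Differentiable ℝ flux := contDiff_flux.differentiable (by norm_num)
  have hDW : Differentiable ℝ (fderiv ℝ flux) :=
    (contDiff_flux.fderiv_right (m := 1) (by norm_num)).differentiable (by norm_num)
  have hsymm : IsSymmSndFDerivAt ℝ flux (g x) :=
    contDiff_flux.contDiffAt.isSymmSndFDerivAt (by simp)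
  have hfun : (fun s : ℝ => divg (fun y => flux (g y + s • g' y)) x) = fun s : ℝ =>
      traceCLM ((fderiv ℝ flux (g x + s • g' x)).comp (fderiv ℝ g x + s • fderiv ℝ g' x)) := by
    funext s
    have h1 : HasFDerivAt (fun y => g y + s • g' y) (fderiv ℝ g x + s • fderiv ℝ g' x) x :=
      hg.hasFDerivAt.add (hg'.hasFDerivAt.const_smul s)
    have h2 := (hW (g x + s • g' x)).hasFDerivAt.comp x h1
    rw [divg_eq]
    exact congrArg traceCLM h2.fderiv
  have hline : ∀ {F : Type} [NormedAddCommGroup F] [NormedSpace ℝ F] (a b : F),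
      HasDerivAt (fun s : ℝ => a + s • b) b 0 := fun a b => by
    simpa using ((hasDerivAt_id (0 : ℝ)).smul_const b).const_add a
  have hc : HasDerivAt (fun s : ℝ => fderiv ℝ flux (g x + s • g' x))
      (fderiv ℝ (fderiv ℝ flux) (g x) (g' x)) 0 :=
    (hDW (g x)).hasFDerivAt.comp_hasDerivAt_of_eq (0 : ℝ) (hline (g x) (g' x)) (by simp)
  have hcomp := hc.clm_comp (hline (fderiv ℝ g x) (fderiv ℝ g' x))
  have hJ := (((hDW (g x)).hasFDerivAt.comp x hg.hasFDerivAt).clm_apply hg'.hasFDerivAt)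
  rw [hfun, divg_eq]
  refine (traceCLM.hasFDerivAt.comp_hasDerivAt (0 : ℝ) hcomp).congr_deriv
    (congrArg traceCLM (Eq.trans ?_ hJ.fderiv.symm))
  ext1 u
  have := hsymm.eq (g' x) (fderiv ℝ g x u)
  simp [this, add_comm]

/-- Gateaux derivative of the capillary operator `F(α, h) = K(h) + α h`:
`s ↦ F(α, h + s h')(x)` is differentiable at `s = 0` with derivative
`div(∇h'/√(1+‖∇h‖²))(x) - div(∇h ⟨∇h', ∇h⟩/(1+‖∇h‖²)^{3/2})(x) + α h'(x)`;
at `h = 0` this derivative equals `Δh'(x) + α h'(x)`. -/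
theorem capillary_operator_gateaux_derivative
    (U : Set (EuclideanSpace ℝ (Fin 2))) (hU : IsOpen U)
    (h h' : EuclideanSpace ℝ (Fin 2) → ℝ)
    (hh : ContDiffOn ℝ 2 h U) (hh' : ContDiffOn ℝ 2 h' U)
    (α : ℝ) (x : EuclideanSpace ℝ (Fin 2)) (hx : x ∈ U) :
    HasDerivAt
      (fun s : ℝ => meanCurv (fun y => h y + s * h' y) x + α * (h x + s * h' x))
      (divg (fun y => (Real.sqrt (1 + ‖gradient h y‖ ^ 2))⁻¹ • gradient h' y) x
        - divg (fun y =>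
            (⟪gradient h' y, gradient h y⟫ / (Real.sqrt (1 + ‖gradient h y‖ ^ 2)) ^ 3)
              • gradient h y) x
        + α * h' x) 0 ∧
    (h = 0 →
      divg (fun y => (Real.sqrt (1 + ‖gradient h y‖ ^ 2))⁻¹ • gradient h' y) x
        - divg (fun y =>
            (⟪gradient h' y, gradient h y⟫ / (Real.sqrt (1 + ‖gradient h y‖ ^ 2)) ^ 3)
              • gradient h y) x
        + α * h' x
      = lap h' x + α * h' x) := by
  have hUx : U ∈ nhds x := hU.mem_nhds hx
  have hg := differentiableAt_gradient (hh.contDiffAt hUx)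
  have hg' := differentiableAt_gradient (hh'.contDiffAt hUx)
  refine ⟨?_, ?_⟩
  · refine HasDerivAt.add ?_ ?_
    · have hK : (fun s : ℝ => meanCurv (fun y => h y + s * h' y) x) =
          fun s : ℝ => divg (fun y => flux (gradient h y + s • gradient h' y)) x := by
        funext s
        refine congrArg traceCLM (Filter.EventuallyEq.fderiv_eq ?_)
        filter_upwards [hUx] with y hy
        have hUy : U ∈ nhds y := hU.mem_nhds hy
        rw [gradient_add_mul ((hh.contDiffAt hUy).differentiableAt (by norm_num))
          ((hh'.contDiffAt hUy).differentiableAt (by norm_num))]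
        rfl
      rw [hK]
      refine (hasDerivAt_divg_flux hg hg').congr_deriv ?_
      have hs : DifferentiableAt ℝ (fun y => Real.sqrt (1 + ‖gradient h y‖ ^ 2)) x :=
        ((hg.norm_sq ℝ).const_add 1).sqrt (one_add_normSq_ne _)
      have hs0 := sqrt_one_add_normSq_ne (gradient h x)
      have hs3 : DifferentiableAt ℝ (fun y => Real.sqrt (1 + ‖gradient h y‖ ^ 2) ^ 3) x :=
        hs.fun_pow 3
      have hq : DifferentiableAt ℝ (fun y => ⟪gradient h' y, gradient h y⟫ /
          Real.sqrt (1 + ‖gradient h y‖ ^ 2) ^ 3) x :=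
        (hg'.inner ℝ hg).fun_mul (hs3.fun_inv (pow_ne_zero 3 hs0))
      simp only [fderiv_flux_apply, divg_eq]
      rw [← map_sub]
      exact congrArg traceCLM (fderiv_fun_sub ((hs.fun_inv hs0).fun_smul hg')
        (hq.fun_smul hg))
    · simpa using (((hasDerivAt_id (0 : ℝ)).mul_const (h' x)).const_add (h x)).const_mul α
  · rintro rfl
    have h0 : ∀ y, gradient (0 : EuclideanSpace ℝ (Fin 2) → ℝ) y = 0 := fun y => by
      simp [gradient]
    simp [h0, divg, lap]
end
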